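/- Fix integers m ≥ 2, s ≥ 4 and d ≥ 2s+2. For every integer r with d+2−s ≤ r ≤ d+s−2 and r+s ≡ d (mod 2), one has σ_{s,r}(X_{m,d}) ≠ ∅. -/

import Mathlib

open scoped LinearAlgebra.Projectivization

noncomputable section

/-- The polynomial ring in `m+1` variables over `K`: homogeneous coordinate ring of `ℙ^m`. -/
abbrev PR (K : Type) [Field K] (m : ℕ) : Type := MvPolynomial (Fin (m+1)) K

/-- The space of degree-`d` forms in `m+1` variables. -/
abbrev Hd (K : Type) [Field K] (m d : ℕ) : Submodule K (PR K m) :=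
  MvPolynomial.homogeneousSubmodule (Fin (m+1)) K d

/-- Projective `m`-space over `K`. -/
abbrev Pm (K : Type) [Field K] (m : ℕ) := ℙ K (Fin (m+1) → K)

/-- The target projective space `ℙ^n`, `n = C(m+d,m) - 1`, of the degree-`d` Veronese
embedding, realized as the projectivization of the dual of the space of degree-`d` forms
(the space of degree-`d` symmetric tensors). -/
abbrev PN (K : Type) [Field K] (m d : ℕ) := ℙ K (Module.Dual K (Hd K m d))

variable {K : Type} [Field K] {m : ℕ}

/-- Hilbert function of `R/I` in degree `t`. -/
def hilbQ (I : Ideal (PR K m)) (t : ℕ) : ℕ :=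
  Module.finrank K ((Hd K m t).map (Ideal.Quotient.mkₐ K I).toLinearMap)

/-- The degree (length) of the projective scheme defined by `I`: the eventual value of the
Hilbert function of `R/I`. -/
def idealDeg (I : Ideal (PR K m)) : ℕ := Filter.limsup (fun t => hilbQ I t) Filter.atTop

/-- `h^1(𝓘_Z(d))` for the zero-dimensional scheme `Z` with (saturated) ideal `I`:
it equals `deg Z - dim (R/I)_d`. -/
def h1I (I : Ideal (PR K m)) (d : ℕ) : ℕ := idealDeg I - hilbQ I d

/-- An ideal is homogeneous. -/
def IsHomogI (I : Ideal (PR K m)) : Prop :=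
  ∀ f ∈ I, ∀ n : ℕ, MvPolynomial.homogeneousComponent n f ∈ I

/-- An ideal is saturated with respect to the irrelevant maximal ideal. -/
def IsSatI (I : Ideal (PR K m)) : Prop :=
  ∀ f : PR K m, (∀ i, MvPolynomial.X i * f ∈ I) → f ∈ I

/-- A closed subscheme of `ℙ^m`, given by its saturated homogeneous ideal. -/
structure PSub (K : Type) [Field K] (m : ℕ) where
  I : Ideal (PR K m)
  homog : IsHomogI I
  sat : IsSatI I

/-- A (closed sub)scheme is zero-dimensional iff the Hilbert function of `R/I` is bounded. -/
def IsZeroDimI (I : Ideal (PR K m)) : Prop := ∃ C, ∀ t, hilbQ I t ≤ C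

/-- A polynomial vanishes at a projective point (every homogeneous component vanishes
at a representative). -/
def vanishesAt (f : PR K m) (a : Pm K m) : Prop :=
  ∀ n : ℕ, MvPolynomial.eval a.rep (MvPolynomial.homogeneousComponent n f) = 0

/-- Zero locus of an ideal in `ℙ^m`. -/
def pzeroLocus (I : Ideal (PR K m)) : Set (Pm K m) := {a | ∀ f ∈ I, vanishesAt f a}

/-- The (saturated) homogeneous ideal of a set of points of `ℙ^m`. -/
def idealOfSet (S : Set (Pm K m)) : Ideal (PR K m) :=
  Ideal.span {f : PR K m | (∃ n, f.IsHomogeneous n) ∧ ∀ a ∈ S, MvPolynomial.eval a.rep f = 0}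

/-- Saturation of a homogeneous ideal: the smallest saturated homogeneous ideal containing it. -/
def satIdeal (J : Ideal (PR K m)) : Ideal (PR K m) := sInf {J' | J ≤ J' ∧ IsHomogI J' ∧ IsSatI J'}

/-- The scheme defined by the (saturated) ideal `I` is reduced. -/
def IsReducedI (I : Ideal (PR K m)) : Prop := I = idealOfSet (pzeroLocus I)

/-- Connected component of a zero-dimensional scheme at a point `a`: the largest subscheme
supported at `a`, i.e. the `a`-primary component. -/
def componentAt (I : Ideal (PR K m)) (a : Pm K m) : Ideal (PR K m) :=
  sInf {J | I ≤ J ∧ IsHomogI J ∧ IsSatI J ∧ pzeroLocus J ⊆ {a}}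

/-- Residual scheme of `Z` with respect to the hypersurface `f = 0`: the colon ideal `(I_Z : f)`. -/
def resIdeal (I : Ideal (PR K m)) (f : PR K m) : Ideal (PR K m) :=
  Submodule.colon I (Ideal.span {f})

/-- Degree of the scheme-theoretic intersection of the subschemes defined by `I` and `J`. -/
def interDeg (I J : Ideal (PR K m)) : ℕ := idealDeg (I ⊔ J)

/-- The degree-`d` Veronese image of a vector `v`: the evaluation-at-`v` functional on
degree-`d` forms. -/
def nu (d : ℕ) (v : Fin (m+1) → K) : Module.Dual K (Hd K m d) :=
  (MvPolynomial.aeval v).toLinearMap ∘ₗ (Hd K m d).subtype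

/-- The linear span of the Veronese image `ν_d(S)` of a set `S` of points of `ℙ^m`. -/
def dualSpan (d : ℕ) (S : Set (Pm K m)) : Submodule K (Module.Dual K (Hd K m d)) :=
  Submodule.span K ((fun a => nu d a.rep) '' S)

/-- The linear span `⟨ν_d(Z)⟩` of the Veronese image of the subscheme with ideal `I`:
the annihilator of the degree-`d` part of `I`. -/
def schemeSpanSub (I : Ideal (PR K m)) (d : ℕ) : Submodule K (Module.Dual K (Hd K m d)) where
  carrier := {φ | ∀ f : Hd K m d, (f : PR K m) ∈ I → φ f = 0}
  add_mem' := by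
    intro a b ha hb f hf
    simp [LinearMap.add_apply, ha f hf, hb f hf]
  zero_mem' := by intro f hf; simp
  smul_mem' := by
    intro c a ha f hf
    simp [LinearMap.smul_apply, ha f hf]

/-- `P ∈ ⟨ν_d(Z)⟩`, for `Z` the subscheme with ideal `I`. -/
def inSpanI (I : Ideal (PR K m)) (d : ℕ) (P : PN K m d) : Prop := P.rep ∈ schemeSpanSub I d

/-- `P ∈ ⟨ν_d(S)⟩` for a set `S` of points of `ℙ^m`. -/
def inSpanSet (d : ℕ) (S : Set (Pm K m)) (P : PN K m d) : Prop := P.rep ∈ dualSpan d S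

/-- `L` is a linear subspace of `ℙ^m`. -/
def IsLinearSub (L : Set (Pm K m)) : Prop :=
  ∃ W : Submodule K (Fin (m+1) → K), L = {a | a.submodule ≤ W}

/-- `L` is a line of `ℙ^m`. -/
def IsLine (L : Set (Pm K m)) : Prop :=
  ∃ W : Submodule K (Fin (m+1) → K), Module.finrank K W = 2 ∧ L = {a | a.submodule ≤ W}

/-- `L` is a plane of `ℙ^m`. -/
def IsPlane (L : Set (Pm K m)) : Prop :=
  ∃ W : Submodule K (Fin (m+1) → K), Module.finrank K W = 3 ∧ L = {a | a.submodule ≤ W}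

/-- `J` is the (saturated homogeneous) ideal of a conic of `ℙ^m`: a degree-2 curve contained
in a plane (possibly reducible). -/
def IsConic (J : Ideal (PR K m)) : Prop :=
  ∃ (W : Submodule K (Fin (m+1) → K)) (q : PR K m),
    Module.finrank K W = 3 ∧ q.IsHomogeneous 2 ∧
    q ∉ idealOfSet {a : Pm K m | a.submodule ≤ W} ∧
    J = satIdeal (idealOfSet {a : Pm K m | a.submodule ≤ W} ⊔ Ideal.span {q})

/-- The algebra of polynomial functions on a `K`-vector space. -/
def polyFunctions (K V : Type) [Field K] [AddCommGroup V] [Module K V] : Subalgebra K (V → K) :=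
  Algebra.adjoin K {g : V → K | ∃ φ : V →ₗ[K] K, g = ⇑φ}

/-- Zariski closure of a subset of a projective space. -/
def zClosure {V : Type} [AddCommGroup V] [Module K V] (T : Set (ℙ K V)) : Set (ℙ K V) :=
  {P | ∀ F ∈ polyFunctions K V, (∀ Q ∈ T, ∀ c : K, F (c • Q.rep) = 0) →
    ∀ c : K, F (c • P.rep) = 0}

/-- The Veronese variety `X_{m,d} = ν_d(ℙ^m)` as a subset of `PN K m d`. -/
def XSet (K : Type) [Field K] (m d : ℕ) : Set (PN K m d) :=
  {Q | ∃ a : Pm K m, Q.submodule = Submodule.span K {nu d a.rep}}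

/-- The image `ν_d(S)` of a set of points of `ℙ^m`, as a subset of `PN K m d`. -/
def nuSet (d : ℕ) (S : Set (Pm K m)) : Set (PN K m d) :=
  {Q | ∃ a ∈ S, Q.submodule = Submodule.span K {nu d a.rep}}

/-- The rank of a point `P` of `PN` with respect to a subset `Y ⊆ PN`. -/
def rankWrt {m d : ℕ} (Y : Set (PN K m d)) (P : PN K m d) : ℕ :=
  sInf {r | ∃ S : Finset (PN K m d), ↑S ⊆ Y ∧ S.card = r ∧
    P.rep ∈ Submodule.span K (Projectivization.rep '' (S : Set (PN K m d)))}

/-- The `s`-th secant variety of `Y ⊆ PN`: the Zariski closure of the union of the spans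
of `s` points of `Y`. -/
def secantWrt {m d : ℕ} (Y : Set (PN K m d)) (s : ℕ) : Set (PN K m d) :=
  zClosure {Q | ∃ S : Finset (PN K m d), ↑S ⊆ Y ∧ S.card ≤ s ∧
    Q.rep ∈ Submodule.span K (Projectivization.rep '' (S : Set (PN K m d)))}

/-- The border rank of `P` with respect to `Y ⊆ PN`. -/
def brankWrt {m d : ℕ} (Y : Set (PN K m d)) (P : PN K m d) : ℕ :=
  sInf {s | 0 < s ∧ P ∈ secantWrt Y s}

/-- Symmetric rank. -/
def srank {m : ℕ} (d : ℕ) (P : PN K m d) : ℕ := rankWrt (XSet K m d) P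

/-- Border rank. -/
def brank {m : ℕ} (d : ℕ) (P : PN K m d) : ℕ := brankWrt (XSet K m d) P

/-- Cactus rank: minimal degree of a zero-dimensional closed subscheme `E ⊂ ℙ^m` with
`P ∈ ⟨ν_d(E)⟩`. -/
def crank {m : ℕ} (d : ℕ) (P : PN K m d) : ℕ :=
  sInf {c | ∃ Z : PSub K m, IsZeroDimI Z.I ∧ idealDeg Z.I = c ∧ inSpanI Z.I d P}

/-- `σ_{s,r}(X_{m,d})`. -/
def sigmaSet (K : Type) [Field K] (m d s r : ℕ) : Set (PN K m d) :=
  {P | brank d P = s ∧ srank d P = r}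

/-- A property `Φ` holds for a general `k`-tuple of points of the linear subspace of `ℙ^m`
determined by `W`. -/
def GenerallyOn (W : Submodule K (Fin (m+1) → K)) (k : ℕ)
    (Φ : (Fin k → Pm K m) → Prop) : Prop :=
  ∃ w : Fin 3 → W, Submodule.span K (Set.range fun j => (w j : Fin (m+1) → K)) = W ∧
    ∃ F : MvPolynomial (Fin k × Fin 3) K, F ≠ 0 ∧
      ∀ c : Fin k → Fin 3 → K,
        MvPolynomial.eval (fun p => c p.1 p.2) F ≠ 0 →
        ∀ e : Fin k → Pm K m,
          (∀ i, (e i).submodule = Submodule.span K {∑ j, c i j • (w j : Fin (m+1) → K)}) → Φ e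

end

noncomputable section
/-! part B: planar lemmas -/
def linF {K : Type} [Field K] (a : Fin 3 → K) : MvPolynomial (Fin 3) K :=
  ∑ i, MvPolynomial.C (a i) * MvPolynomial.X i

lemma linF_eval {K : Type} [Field K] (a v : Fin 3 → K) :
    MvPolynomial.eval v (linF a) = ∑ i, a i * v i := by
  simp [linF]

lemma linF_hom {K : Type} [Field K] (a : Fin 3 → K) : (linF a).IsHomogeneous 1 := by
  apply MvPolynomial.IsHomogeneous.sum
  intro i _
  simpa using (MvPolynomial.isHomogeneous_C (Fin 3) (a i)).mul (MvPolynomial.isHomogeneous_X K i)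

lemma exists_lin_of_functional {K : Type} [Field K] (f : (Fin 3 → K) →ₗ[K] K) :
    ∃ a : Fin 3 → K, ∀ v, ∑ i, a i * v i = f v := by
  refine ⟨fun i => f (Pi.single i 1), fun v => ?_⟩
  rw [LinearMap.pi_apply_eq_sum_univ f v]
  refine Finset.sum_congr rfl fun i _ => ?_
  have : (Pi.single i (1 : K) : Fin 3 → K) = fun j => if i = j then 1 else 0 := by
    ext j
    simp [Pi.single_apply, eq_comm]
  simp only [this, smul_eq_mul, mul_comm]

lemma sep_points {K : Type} [Field K] {Q Q' : ℙ K (Fin 3 → K)} (h : Q' ≠ Q) :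
    ∃ a : Fin 3 → K, ∑ i, a i * Q'.rep i = 0 ∧ ∑ i, a i * Q.rep i ≠ 0 := by
  have hn : Q.rep ∉ Submodule.span K {Q'.rep} := by
    intro hm
    rw [Submodule.mem_span_singleton] at hm
    obtain ⟨c, hc⟩ := hm
    apply h
    rw [← Q.mk_rep, ← Q'.mk_rep, eq_comm, Projectivization.mk_eq_mk_iff']
    exact ⟨c, hc⟩
  obtain ⟨f, hf, hle⟩ := Submodule.exists_le_ker_of_notMem hn
  obtain ⟨a, ha⟩ := exists_lin_of_functional f
  refine ⟨a, ?_, ?_⟩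
  · rw [ha]; exact hle (Submodule.mem_span_singleton_self _)
  · rw [ha]; exact hf

lemma nonvan {K : Type} [Field K] (Q : ℙ K (Fin 3 → K)) :
    ∃ a : Fin 3 → K, ∑ i, a i * Q.rep i ≠ 0 := by
  obtain ⟨i, hi⟩ := Function.ne_iff.mp Q.rep_nonzero
  refine ⟨Pi.single i 1, ?_⟩
  simpa [Pi.single_apply] using hi

lemma two_points {K : Type} [Field K] (Q Q' : ℙ K (Fin 3 → K)) :
    ∃ a : Fin 3 → K, a ≠ 0 ∧ ∑ i, a i * Q.rep i = 0 ∧ ∑ i, a i * Q'.rep i = 0 := by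
  have hlt : Submodule.span K (Set.range ![Q.rep, Q'.rep]) < ⊤ := by
    apply Submodule.lt_top_of_finrank_lt_finrank
    calc _ ≤ _ := finrank_range_le_card (R := K) ![Q.rep, Q'.rep]
      _ < _ := by simp
  obtain ⟨x, -, hx⟩ := SetLike.exists_of_lt hlt
  obtain ⟨f, hf, hle⟩ := Submodule.exists_le_ker_of_notMem hx
  obtain ⟨a, ha⟩ := exists_lin_of_functional f
  refine ⟨a, ?_, ?_, ?_⟩
  · rintro rfl
    apply hf
    rw [← ha]; simp
  · rw [ha]; exact hle (Submodule.subset_span ⟨0, rfl⟩)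
  · rw [ha]; exact hle (Submodule.subset_span ⟨1, rfl⟩)

lemma prod_form {K : Type} [Field K] (Q : ℙ K (Fin 3 → K)) (D : Finset (ℙ K (Fin 3 → K)))
    (n : ℕ) (hn : D.card ≤ n) :
    ∃ g : MvPolynomial (Fin 3) K, g.IsHomogeneous n ∧ MvPolynomial.eval Q.rep g ≠ 0 ∧
      ∀ Q' ∈ D, Q' ≠ Q → MvPolynomial.eval Q'.rep g = 0 := by
  classical
  induction D using Finset.induction_on generalizing n with
  | empty =>
    obtain ⟨a, ha⟩ := nonvan Q
    refine ⟨linF a ^ n, by simpa using (linF_hom a).pow n, ?_, by simp⟩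
    rw [map_pow, linF_eval]
    exact pow_ne_zero _ ha
  | insert Q1 D h1 ih =>
    rw [Finset.card_insert_of_notMem h1] at hn
    obtain ⟨n, rfl⟩ : ∃ k, n = k + 1 := ⟨n - 1, by omega⟩
    obtain ⟨g, hg, hgQ, hgD⟩ := ih n (by omega)
    have : ∃ a : Fin 3 → K, (Q1 ≠ Q → ∑ i, a i * Q1.rep i = 0) ∧ ∑ i, a i * Q.rep i ≠ 0 := by
      by_cases hQ : Q1 = Q
      · obtain ⟨a, ha⟩ := nonvan Q
        exact ⟨a, fun h => absurd hQ h, ha⟩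
      · obtain ⟨a, ha, ha'⟩ := sep_points hQ
        exact ⟨a, fun _ => ha, ha'⟩
    obtain ⟨a, ha, ha'⟩ := this
    refine ⟨g * linF a, hg.mul (linF_hom a), ?_, ?_⟩
    · rw [map_mul, linF_eval]; exact mul_ne_zero hgQ ha'
    · intro Q' hQ' hne
      rw [map_mul, linF_eval]
      rcases Finset.mem_insert.mp hQ' with rfl | h
      · rw [ha hne, mul_zero]
      · rw [hgD Q' h hne, zero_mul]

lemma lemA {K : Type} [Field K] (W : Finset (ℙ K (Fin 3 → K))) (c : ℙ K (Fin 3 → K) → K) (e : ℕ)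
    (hc : ∀ Q ∈ W, c Q ≠ 0)
    (hrel : ∀ f : MvPolynomial (Fin 3) K, f.IsHomogeneous e →
      ∑ Q ∈ W, c Q * MvPolynomial.eval Q.rep f = 0)
    (hW : W.card ≤ e + 1) : W = ∅ := by
  classical
  by_contra hne
  obtain ⟨Q, hQ⟩ := Finset.nonempty_iff_ne_empty.mpr hne
  obtain ⟨g, hg, hgQ, hgD⟩ := prod_form Q (W.erase Q) e (by
    rw [Finset.card_erase_of_mem hQ]; omega)
  have := hrel g hg
  rw [Finset.sum_eq_single_of_mem Q hQ] at this
  · exact mul_ne_zero (hc Q hQ) hgQ this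
  · intro Q' hQ' hne'
    rw [hgD Q' (Finset.mem_erase.mpr ⟨hne', hQ'⟩) hne', mul_zero]

open Classical in
lemma resSum {K : Type} [Field K] (W : Finset (ℙ K (Fin 3 → K))) (c : ℙ K (Fin 3 → K) → K)
    (a : Fin 3 → K) (f : MvPolynomial (Fin 3) K) :
    ∑ Q ∈ W.filter (fun Q => ∑ i, a i * Q.rep i ≠ 0),
      (c Q * ∑ i, a i * Q.rep i) * MvPolynomial.eval Q.rep f =
    ∑ Q ∈ W, c Q * MvPolynomial.eval Q.rep (linF a * f) := by
  rw [Finset.sum_filter]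
  refine Finset.sum_congr rfl fun Q _ => ?_
  rw [map_mul, linF_eval]
  split_ifs with h
  · ring
  · push Not at h; rw [h]; ring

lemma lemB {K : Type} [Field K] (e : ℕ) : ∀ (W : Finset (ℙ K (Fin 3 → K)))
    (c : ℙ K (Fin 3 → K) → K)
    (_ : ∀ Q ∈ W, c Q ≠ 0)
    (_ : ∀ f : MvPolynomial (Fin 3) K, f.IsHomogeneous e →
      ∑ Q ∈ W, c Q * MvPolynomial.eval Q.rep f = 0)
    (_ : W.card ≤ 2 * e + 1),
    ∃ a : Fin 3 → K, a ≠ 0 ∧ ∀ Q ∈ W, ∑ i, a i * Q.rep i = 0 := by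
  classical
  induction e with
  | zero =>
    intro W c hc hrel hW
    have := lemA W c 0 hc hrel hW
    subst this
    exact ⟨fun _ => 1, fun h => one_ne_zero (congrFun h 0), by simp⟩
  | succ e ih =>
    intro W c hc hrel hW
    by_cases h1 : W.card ≤ 1
    · have := lemA W c _ hc hrel (by omega)
      subst this
      exact ⟨fun _ => 1, fun h => one_ne_zero (congrFun h 0), by simp⟩
    obtain ⟨Q1, hQ1, Q2, hQ2, hne⟩ := Finset.one_lt_card.mp (not_le.mp h1)
    obtain ⟨a, ha, ha1, ha2⟩ := two_points Q1 Q2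
    have key : ∀ a : Fin 3 → K, ∀ f : MvPolynomial (Fin 3) K, f.IsHomogeneous e →
        ∑ Q ∈ W.filter (fun Q => ∑ i, a i * Q.rep i ≠ 0),
          (c Q * ∑ i, a i * Q.rep i) * MvPolynomial.eval Q.rep f = 0 := by
      intro a f hf
      rw [resSum]
      exact hrel _ (by rw [add_comm]; exact (linF_hom a).mul hf)
    have key0 : ∀ a : Fin 3 → K, ∀ Q ∈ W.filter (fun Q => ∑ i, a i * Q.rep i ≠ 0),
        (c Q * ∑ i, a i * Q.rep i) ≠ 0 := by
      intro a Q hQ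
      rw [Finset.mem_filter] at hQ
      exact mul_ne_zero (hc Q hQ.1) hQ.2
    have hc1 : (W.filter (fun Q => ∑ i, a i * Q.rep i ≠ 0)).card + 2 ≤ W.card := by
      have hsub : W.filter (fun Q => ∑ i, a i * Q.rep i ≠ 0) ⊆ (W.erase Q1).erase Q2 := by
        intro Q hQ
        rw [Finset.mem_filter] at hQ
        refine Finset.mem_erase.mpr ⟨?_, Finset.mem_erase.mpr ⟨?_, hQ.1⟩⟩
        · rintro rfl; exact hQ.2 ha2
        · rintro rfl; exact hQ.2 ha1
      have := Finset.card_le_card hsub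
      rw [Finset.card_erase_of_mem (Finset.mem_erase.mpr ⟨hne.symm, hQ2⟩),
        Finset.card_erase_of_mem hQ1] at this
      omega
    obtain ⟨a', ha', hv⟩ := ih _ _ (key0 a) (key a) (by omega)
    by_cases hE : W.filter (fun Q => ∑ i, a i * Q.rep i ≠ 0) = ∅
    · refine ⟨a, ha, fun Q hQ => ?_⟩
      by_contra hcon
      have : Q ∈ W.filter (fun Q => ∑ i, a i * Q.rep i ≠ 0) := Finset.mem_filter.mpr ⟨hQ, hcon⟩
      rw [hE] at this
      simp at this
    have hbig : ¬ (W.filter (fun Q => ∑ i, a i * Q.rep i ≠ 0)).card ≤ e + 1 := fun h =>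
      hE (lemA _ _ e (key0 a) (key a) h)
    have hdis : (W.filter (fun Q => ∑ i, a' i * Q.rep i ≠ 0)).card +
        (W.filter (fun Q => ∑ i, a i * Q.rep i ≠ 0)).card ≤ W.card := by
      rw [← Finset.card_union_of_disjoint]
      · exact Finset.card_le_card (Finset.union_subset (Finset.filter_subset _ _)
          (Finset.filter_subset _ _))
      · rw [Finset.disjoint_left]
        intro Q hQ hQ'
        exact (Finset.mem_filter.mp hQ).2 (hv Q hQ')
    have hE2 := lemA _ _ e (key0 a') (key a') (by omega)
    refine ⟨a', ha', fun Q hQ => ?_⟩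
    by_contra hcon
    have : Q ∈ W.filter (fun Q => ∑ i, a' i * Q.rep i ≠ 0) := Finset.mem_filter.mpr ⟨hQ, hcon⟩
    rw [hE2] at this
    simp at this

def lpt {K σ : Type} [Field K] [DecidableEq σ] (i0 i1 : σ) (t : K) : σ → K :=
  fun i => if i = i0 then 1 else if i = i1 then t else 0

def lineMap {K σ : Type} [Field K] [DecidableEq σ] (i0 i1 : σ) :
    MvPolynomial σ K →ₐ[K] Polynomial K :=
  MvPolynomial.aeval (fun i => if i = i0 then 1 else if i = i1 then Polynomial.X else 0)

lemma lineMap_eval {K σ : Type} [Field K] [DecidableEq σ] (i0 i1 : σ) (f : MvPolynomial σ K)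
    (t : K) : (lineMap i0 i1 f).eval t = MvPolynomial.eval (lpt i0 i1 t) f := by
  have : ((Polynomial.aeval t).comp (lineMap i0 i1) : MvPolynomial σ K →ₐ[K] K) =
      MvPolynomial.aeval (lpt i0 i1 t) := by
    apply MvPolynomial.algHom_ext
    intro i
    simp only [lineMap, lpt, AlgHom.comp_apply, MvPolynomial.aeval_X]
    split_ifs <;> simp
  have h := DFunLike.congr_fun this f
  rw [AlgHom.comp_apply, Polynomial.coe_aeval_eq_eval] at h
  rw [h]; rfl

lemma lineMap_natDegree {K σ : Type} [Field K] [DecidableEq σ] (i0 i1 : σ) (f : MvPolynomial σ K)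
    (d : ℕ) (hf : f.IsHomogeneous d) : (lineMap i0 i1 f).natDegree ≤ d := by
  have := MvPolynomial.aeval_natDegree_le f hf.totalDegree_le
    (fun i => if i = i0 then 1 else if i = i1 then (Polynomial.X : Polynomial K) else 0) (n := 1)
    (by intro i; split_ifs <;> simp)
  simpa [lineMap] using this

lemma eval_smul_hom {K σ : Type} [Field K] (f : MvPolynomial σ K) (d : ℕ)
    (hf : f.IsHomogeneous d) (c : K) (v : σ → K) :
    MvPolynomial.eval (c • v) f = c ^ d * MvPolynomial.eval v f := by
  rw [MvPolynomial.eval_eq, MvPolynomial.eval_eq, Finset.mul_sum]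
  refine Finset.sum_congr rfl fun x hx => ?_
  have h := hf (MvPolynomial.mem_support_iff.mp hx)
  have h2 : ∑ i ∈ x.support, x i = d := by
    rw [← h, Finsupp.weight_apply, Finsupp.sum]
    simp
  simp only [Pi.smul_apply, smul_eq_mul, mul_pow, Finset.prod_mul_distrib, Finset.prod_pow_eq_pow_sum,
    h2]
  ring

lemma lineMap_linF {K : Type} [Field K] (a : Fin 3 → K) :
    lineMap 0 1 (linF a) = Polynomial.C (a 0) + Polynomial.C (a 1) * Polynomial.X := by
  have h10 : (1 : Fin 3) ≠ 0 := by decide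
  have h20 : (2 : Fin 3) ≠ 0 := by decide
  have h21 : (2 : Fin 3) ≠ 1 := by decide
  simp [linF, lineMap, Fin.sum_univ_three, h20, h21]

def E0 (K : Type) [Field K] : ℙ K (Fin 3 → K) :=
  Projectivization.mk K (lpt 0 1 0) (fun h => one_ne_zero (α := K) (by simpa [lpt] using congrFun h 0))

lemma E0_rep (K : Type) [Field K] : ∃ u : K, u ≠ 0 ∧ (E0 K).rep = u • (lpt 0 1 0 : Fin 3 → K) := by
  obtain ⟨u, hu⟩ := Projectivization.exists_smul_eq_mk_rep K (lpt 0 1 0 : Fin 3 → K)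
    (fun h => one_ne_zero (α := K) (by simpa [lpt] using congrFun h 0))
  exact ⟨u, u.ne_zero, hu.symm⟩

lemma test_form {K : Type} [Field K] (D : Finset (ℙ K (Fin 3 → K))) (n j : ℕ)
    (hn : D.card ≤ n) (hj : E0 K ∈ D → 1 ≤ j) :
    ∃ f : MvPolynomial (Fin 3) K, f.IsHomogeneous (n + j) ∧ (∀ Q ∈ D, MvPolynomial.eval Q.rep f = 0) ∧
      (lineMap 0 1 f).coeff j ≠ 0 ∧ ∀ i < j, (lineMap 0 1 f).coeff i = 0 := by
  obtain ⟨g, hg, hg0, hgD⟩ := prod_form (E0 K) D n hn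
  obtain ⟨u, hu, hrep⟩ := E0_rep K
  have hl : lineMap 0 1 (g * MvPolynomial.X 1 ^ j) = lineMap 0 1 g * Polynomial.X ^ j := by
    simp [lineMap]
  refine ⟨g * MvPolynomial.X 1 ^ j, ?_, ?_, ?_, ?_⟩
  · simpa using hg.mul ((MvPolynomial.isHomogeneous_X K (1 : Fin 3)).pow j)
  · intro Q hQ
    rw [map_mul]
    by_cases h : Q = E0 K
    · subst h
      have : (E0 K).rep 1 = 0 := by rw [hrep]; simp [lpt]
      have hj := hj hQ
      rw [map_pow, MvPolynomial.eval_X, this, zero_pow (by omega), mul_zero]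
    · rw [hgD Q hQ h, zero_mul]
  · rw [hl]
    have := Polynomial.coeff_mul_X_pow (lineMap 0 1 g) j 0
    rw [zero_add] at this
    rw [this, Polynomial.coeff_zero_eq_eval_zero, lineMap_eval]
    rw [hrep, eval_smul_hom g n hg] at hg0
    exact right_ne_zero_of_mul hg0
  · intro i hi
    rw [hl, Polynomial.coeff_mul_X_pow', if_neg (by omega)]

lemma plane_lower {K : Type} [Field K] (d b k : ℕ) (hb : 1 ≤ b) (hd : 2 * (b + 1 + k) + 2 ≤ d)
    (A B : Finset (ℙ K (Fin 3 → K))) (α β : ℙ K (Fin 3 → K) → K)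
    (hB : B.card = k) (hβ : ∀ Q ∈ B, β Q ≠ 0) (hB2 : ∀ Q ∈ B, Q.rep 2 ≠ 0)
    (hrel : ∀ f : MvPolynomial (Fin 3) K, f.IsHomogeneous d →
      (lineMap 0 1 f).coeff b + ∑ Q ∈ B, β Q * MvPolynomial.eval Q.rep f =
        ∑ Q ∈ A, α Q * MvPolynomial.eval Q.rep f) :
    d + 1 + k ≤ A.card + b := by
  classical
  by_contra hlt
  push Not at hlt
  set c : ℙ K (Fin 3 → K) → K := fun Q => (if Q ∈ A then α Q else 0) - (if Q ∈ B then β Q else 0)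
    with hcdef
  set C := (A ∪ B).filter (fun Q => c Q ≠ 0) with hC
  have hrelC : ∀ f : MvPolynomial (Fin 3) K, f.IsHomogeneous d →
      (lineMap 0 1 f).coeff b = ∑ Q ∈ C, c Q * MvPolynomial.eval Q.rep f := by
    intro f hf
    have h1 : ∑ Q ∈ C, c Q * MvPolynomial.eval Q.rep f =
        ∑ Q ∈ A ∪ B, c Q * MvPolynomial.eval Q.rep f := by
      rw [hC, Finset.sum_filter]
      refine Finset.sum_congr rfl fun Q _ => ?_
      split_ifs with h
      · rfl
      · push Not at h; rw [h, zero_mul]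
    rw [h1, eq_sub_of_add_eq (hrel f hf)]
    simp only [hcdef, sub_mul, Finset.sum_sub_distrib, ite_mul, zero_mul]
    rw [← Finset.sum_filter, ← Finset.sum_filter]
    congr 2
    · ext Q; simp +contextual
    · ext Q; simp +contextual
  have hcC : ∀ Q ∈ C, c Q ≠ 0 := fun Q hQ => (Finset.mem_filter.mp hQ).2
  have hCcard : C.card ≤ A.card + k := by
    rw [← hB]
    exact (Finset.card_filter_le _ _).trans (Finset.card_union_le _ _)
  obtain ⟨e, rfl⟩ : ∃ e, d = e + 1 := ⟨d - 1, by omega⟩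
  have hres : ∀ a : Fin 3 → K, ∀ f : MvPolynomial (Fin 3) K, f.IsHomogeneous e →
      ∑ Q ∈ C.filter (fun Q => ∑ i, a i * Q.rep i ≠ 0),
        (c Q * ∑ i, a i * Q.rep i) * MvPolynomial.eval Q.rep f =
      a 0 * (lineMap 0 1 f).coeff b + a 1 * (lineMap 0 1 f).coeff (b - 1) := by
    intro a f hf
    rw [resSum, ← hrelC _ (by rw [add_comm]; exact (linF_hom a).mul hf), map_mul, lineMap_linF]
    obtain ⟨b', rfl⟩ : ∃ b', b = b' + 1 := ⟨b - 1, by omega⟩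
    rw [add_mul, Polynomial.coeff_add, Polynomial.coeff_C_mul, mul_assoc, Polynomial.coeff_C_mul,
      Polynomial.coeff_X_mul]
    simp
  have hres0 : ∀ a : Fin 3 → K, ∀ Q ∈ C.filter (fun Q => ∑ i, a i * Q.rep i ≠ 0),
        (c Q * ∑ i, a i * Q.rep i) ≠ 0 := by
    intro a Q hQ
    rw [Finset.mem_filter] at hQ
    exact mul_ne_zero (hcC Q hQ.1) hQ.2
  set z : Fin 3 → K := ![0, 0, 1] with hz
  have hzQ : ∀ Q : ℙ K (Fin 3 → K), ∑ i, z i * Q.rep i = Q.rep 2 := by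
    intro Q; simp [hz, Fin.sum_univ_three]
  set C1 := C.filter (fun Q => ∑ i, z i * Q.rep i ≠ 0) with hC1
  have hrel1 : ∀ f : MvPolynomial (Fin 3) K, f.IsHomogeneous e →
      ∑ Q ∈ C1, (c Q * ∑ i, z i * Q.rep i) * MvPolynomial.eval Q.rep f = 0 := by
    intro f hf
    rw [hres z f hf]
    simp [hz]
  by_cases hE : C1 = ∅
  · have hout : ∀ Q ∈ C, Q ∉ B := by
      intro Q hQ hQB
      have : Q ∈ C1 := Finset.mem_filter.mpr ⟨hQ, by rw [hzQ]; exact hB2 Q hQB⟩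
      rw [hE] at this
      simp at this
    have hBA : B ⊆ A := by
      intro Q hQ
      by_contra hQA
      refine hout Q (Finset.mem_filter.mpr ⟨Finset.mem_union_right _ hQ, ?_⟩) hQ
      simp only [hcdef, if_neg hQA, if_pos hQ, zero_sub]
      exact neg_ne_zero.mpr (hβ Q hQ)
    have hCA : C ⊆ A \ B := by
      intro Q hQ
      have h1 := hout Q hQ
      have h2 := (Finset.mem_filter.mp hQ).1
      rw [Finset.mem_union] at h2
      exact Finset.mem_sdiff.mpr ⟨h2.resolve_right h1, h1⟩
    have h3 := Finset.card_le_card hCA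
    rw [Finset.card_sdiff_of_subset hBA] at h3
    obtain ⟨f, hf, hf0, hfb, -⟩ := test_form C (e + 1 - b) b (by omega) (fun _ => hb)
    rw [Nat.sub_add_cancel (by omega)] at hf
    apply hfb
    rw [hrelC f hf]
    exact Finset.sum_eq_zero fun Q hQ => by rw [hf0 Q hQ, mul_zero]
  · have hC1card : C1.card ≤ C.card := Finset.card_filter_le _ _
    obtain ⟨a, ha, hv⟩ := lemB e C1 _ (hres0 z) hrel1 (by omega)
    have hbig : ¬ C1.card ≤ e + 1 := fun h => hE (lemA _ _ e (hres0 z) hrel1 h)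
    have hdis : (C.filter (fun Q => ∑ i, a i * Q.rep i ≠ 0)).card + C1.card ≤ C.card := by
      rw [← Finset.card_union_of_disjoint]
      · exact Finset.card_le_card (Finset.union_subset (Finset.filter_subset _ _)
          (Finset.filter_subset _ _))
      · rw [Finset.disjoint_left]
        intro Q hQ hQ'
        exact (Finset.mem_filter.mp hQ).2 (hv Q hQ')
    have h01 : a 0 ≠ 0 ∨ a 1 ≠ 0 := by
      by_contra hcon
      push Not at hcon
      obtain ⟨Q, hQ⟩ := Finset.nonempty_iff_ne_empty.mpr hE
      have h1 := hv Q hQ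
      have h2 := (Finset.mem_filter.mp hQ).2
      rw [hzQ] at h2
      rw [Fin.sum_univ_three, hcon.1, hcon.2, zero_mul, zero_mul, zero_add, zero_add] at h1
      have h3 := (mul_eq_zero.mp h1).resolve_right h2
      apply ha
      ext i
      fin_cases i
      · exact hcon.1
      · exact hcon.2
      · exact h3
    by_cases h0 : a 0 = 0
    · have h1 := h01.resolve_left (fun h => h h0)
      obtain ⟨f, hf, hf0, hfb, -⟩ := test_form (C.filter (fun Q => ∑ i, a i * Q.rep i ≠ 0))
        (e - (b - 1)) (b - 1) (by omega) (by
          intro h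
          exfalso
          obtain ⟨u, hu, hrep⟩ := E0_rep K
          apply (Finset.mem_filter.mp h).2
          rw [hrep, Fin.sum_univ_three]
          simp [lpt, h0])
      rw [Nat.sub_add_cancel (by omega)] at hf
      have := hres a f hf
      rw [Finset.sum_eq_zero (fun Q hQ => by rw [hf0 Q hQ, mul_zero]), h0, zero_mul, zero_add] at this
      exact mul_ne_zero h1 hfb this.symm
    · obtain ⟨f, hf, hf0, hfb, hfb'⟩ := test_form (C.filter (fun Q => ∑ i, a i * Q.rep i ≠ 0))
        (e - b) b (by omega) (fun _ => hb)
      rw [Nat.sub_add_cancel (by omega)] at hf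
      have := hres a f hf
      rw [Finset.sum_eq_zero (fun Q hQ => by rw [hf0 Q hQ, mul_zero]), hfb' (b - 1) (by omega),
        mul_zero, add_zero] at this
      exact mul_ne_zero h0 hfb this.symm

lemma nu_apply {K : Type} [Field K] {m : ℕ} (d : ℕ) (v : Fin (m+1) → K) (f : Hd K m d) :
    nu d v f = MvPolynomial.eval v (f : PR K m) := rfl

lemma nu_smul {K : Type} [Field K] {m : ℕ} (d : ℕ) (c : K) (v : Fin (m+1) → K) :
    nu d (c • v) = c ^ d • nu d v := by
  ext f
  rw [LinearMap.smul_apply, nu_apply, nu_apply, eval_smul_hom _ d f.2, smul_eq_mul]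

lemma nu_ne_zero {K : Type} [Field K] {m : ℕ} (d : ℕ) (v : Fin (m+1) → K) (hv : v ≠ 0) :
    nu d v ≠ 0 := by
  obtain ⟨i, hi⟩ := Function.ne_iff.mp hv
  intro h
  have h1 := DFunLike.congr_fun h (⟨MvPolynomial.X i ^ d, by
    simpa using (MvPolynomial.isHomogeneous_X K i).pow d⟩ : Hd K m d)
  rw [nu_apply] at h1
  simp only [map_pow, MvPolynomial.eval_X, LinearMap.zero_apply] at h1
  exact pow_ne_zero d hi h1

lemma exists_S {K : Type} [Field K] {m : ℕ} (d : ℕ) {ι : Type} [Fintype ι] (w : ι → K)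
    (v : ι → Fin (m+1) → K) (hv : ∀ i, v i ≠ 0) :
    ∃ S : Finset (PN K m d), ↑S ⊆ XSet K m d ∧ S.card ≤ Fintype.card ι ∧
      ∑ i, w i • nu d (v i) ∈ Submodule.span K (Projectivization.rep '' (S : Set (PN K m d))) := by
  classical
  let q : ι → PN K m d := fun i => Projectivization.mk K (nu d (v i)) (nu_ne_zero d _ (hv i))
  refine ⟨Finset.univ.image q, ?_, Finset.card_image_le, ?_⟩
  · intro Q hQ
    simp only [Finset.coe_image, Finset.coe_univ, Set.image_univ, Set.mem_range] at hQ
    obtain ⟨i, rfl⟩ := hQ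
    refine ⟨Projectivization.mk K (v i) (hv i), ?_⟩
    obtain ⟨u, hu⟩ := Projectivization.exists_smul_eq_mk_rep K (v i) (hv i)
    rw [← hu, Projectivization.submodule_mk, Units.smul_def, nu_smul]
    exact (Submodule.span_singleton_smul_eq (IsUnit.mk0 _ (pow_ne_zero d u.ne_zero)) _).symm
  · refine Submodule.sum_mem _ fun i _ => Submodule.smul_mem _ _ ?_
    obtain ⟨u, hu⟩ := Projectivization.exists_smul_eq_mk_rep K (nu d (v i)) (nu_ne_zero d _ (hv i))
    have : nu d (v i) = (u⁻¹ : Kˣ) • (q i).rep := by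
      rw [← hu, inv_smul_smul]
    rw [this, Units.smul_def]
    exact Submodule.smul_mem _ _ (Submodule.subset_span ⟨q i, by simp, rfl⟩)

lemma of_S {K : Type} [Field K] {m : ℕ} (d : ℕ) (S : Finset (PN K m d)) (hS : ↑S ⊆ XSet K m d)
    (ψ : Module.Dual K (Hd K m d))
    (h : ψ ∈ Submodule.span K (Projectivization.rep '' (S : Set (PN K m d)))) :
    ∃ (g : S → K) (v : S → Fin (m+1) → K), (∀ Q, v Q ≠ 0) ∧ ψ = ∑ Q, g Q • nu d (v Q) := by
  have hX : ∀ Q : S, ∃ (u : K) (v : Fin (m+1) → K), v ≠ 0 ∧ (Q : PN K m d).rep = u • nu d v := by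
    intro Q
    obtain ⟨a, ha⟩ := hS Q.2
    have : (Q : PN K m d).rep ∈ Submodule.span K {nu d a.rep} := by
      rw [← ha, Projectivization.submodule_eq]
      exact Submodule.mem_span_singleton_self _
    obtain ⟨u, hu⟩ := Submodule.mem_span_singleton.mp this
    exact ⟨u, a.rep, a.rep_nonzero, hu.symm⟩
  choose u v hv huv using hX
  have hr : Projectivization.rep '' (S : Set (PN K m d)) =
      Set.range (fun Q : S => (Q : PN K m d).rep) := by
    ext x; simp
  rw [hr, Submodule.mem_span_range_iff_exists_fun] at h
  obtain ⟨c, hc⟩ := h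
  refine ⟨fun Q => c Q * u Q, v, hv, ?_⟩
  rw [← hc]
  refine Finset.sum_congr rfl fun Q _ => ?_
  rw [huv Q, smul_smul]

lemma roots {K : Type} [Field K] [IsAlgClosed K] [CharZero K] (N b : ℕ) (hN : 0 < N) :
    ∃ (w x : Fin N → K), ∀ k : ℕ, ∑ j, w j * x j ^ k = if N ∣ k + (N - b) then 1 else 0 := by
  have : NeZero N := ⟨hN.ne'⟩
  have : NeZero (N : K) := ⟨Nat.cast_ne_zero.mpr hN.ne'⟩
  obtain ⟨ζ, hζ⟩ := HasEnoughRootsOfUnity.exists_primitiveRoot K N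
  refine ⟨fun j => (N : K)⁻¹ * (ζ ^ (j : ℕ)) ^ (N - b), fun j => ζ ^ (j : ℕ), fun k => ?_⟩
  have h1 : ∀ j : Fin N, (N : K)⁻¹ * (ζ ^ (j : ℕ)) ^ (N - b) * (ζ ^ (j : ℕ)) ^ k =
      (N : K)⁻¹ * (ζ ^ (k + (N - b))) ^ (j : ℕ) := by
    intro j
    rw [← pow_mul, ← pow_mul, ← pow_mul, mul_assoc, ← pow_add]
    congr 2
    ring
  rw [Finset.sum_congr rfl (fun j _ => h1 j), ← Finset.mul_sum,
    Fin.sum_univ_eq_sum_range (fun j => (ζ ^ (k + (N - b))) ^ j) N]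
  split_ifs with h
  · rw [(hζ.pow_eq_one_iff_dvd _).mpr h]
    simp [NeZero.ne (N : K)]
  · have hne : ζ ^ (k + (N - b)) ≠ 1 := fun h' => h ((hζ.pow_eq_one_iff_dvd _).mp h')
    have := mul_neg_geom_sum (ζ ^ (k + (N - b))) N
    rw [← pow_mul, mul_comm _ N, pow_mul, hζ.pow_eq_one, one_pow, sub_self] at this
    rw [(mul_eq_zero.mp this).resolve_left (sub_ne_zero.mpr hne.symm), mul_zero]

lemma roots_eval {K : Type} [Field K] {m N b : ℕ} (d : ℕ) (w x : Fin N → K)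
    (hw : ∀ k : ℕ, ∑ j, w j * x j ^ k = if N ∣ k + (N - b) then 1 else 0)
    (i0 i1 : Fin (m+1)) (ε : K) (f : Hd K m d) :
    ∑ j, w j * MvPolynomial.eval (lpt i0 i1 (ε * x j)) (f : PR K m) =
      ∑ k ∈ Finset.range (d + 1), if N ∣ k + (N - b) then
        ε ^ k * (lineMap i0 i1 (f : PR K m)).coeff k else 0 := by
  have h1 : ∀ j, w j * MvPolynomial.eval (lpt i0 i1 (ε * x j)) (f : PR K m) =
      ∑ k ∈ Finset.range (d + 1),
        (ε ^ k * (lineMap i0 i1 (f : PR K m)).coeff k) * (w j * x j ^ k) := by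
    intro j
    rw [← lineMap_eval, Polynomial.eval_eq_sum_range' (n := d + 1)
      (Nat.lt_succ_of_le (lineMap_natDegree i0 i1 _ d f.2)), Finset.mul_sum]
    refine Finset.sum_congr rfl fun k _ => ?_
    rw [mul_pow]; ring
  rw [Finset.sum_congr rfl (fun j _ => h1 j), Finset.sum_comm]
  refine Finset.sum_congr rfl fun k _ => ?_
  rw [← Finset.mul_sum, hw k]
  split_ifs <;> simp

def lcf {K : Type} [Field K] {m : ℕ} (d : ℕ) (i0 i1 : Fin (m+1)) (k : ℕ) :
    Module.Dual K (Hd K m d) :=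
  Polynomial.lcoeff K k ∘ₗ (lineMap i0 i1).toLinearMap ∘ₗ (Hd K m d).subtype

lemma lcf_apply {K : Type} [Field K] {m : ℕ} (d : ℕ) (i0 i1 : Fin (m+1)) (k : ℕ) (f : Hd K m d) :
    lcf d i0 i1 k f = (lineMap i0 i1 (f : PR K m)).coeff k := rfl

def phi {K : Type} [Field K] {m : ℕ} (d b k : ℕ) (i0 i1 i2 : Fin (m+1)) :
    Module.Dual K (Hd K m d) :=
  lcf d i0 i1 b + ∑ i : Fin k, nu d (lpt i2 i1 ((i : ℕ) : K))

lemma lpt_ne_zero {K σ : Type} [Field K] [DecidableEq σ] (i0 i1 : σ) (t : K) : lpt i0 i1 t ≠ 0 :=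
  fun h => one_ne_zero (α := K) (by simpa [lpt] using congrFun h i0)

/-- a functional with coefficients at roots plus the fixed points -/
lemma exists_S_lines {K : Type} [Field K] {m : ℕ} (d N k : ℕ) (w x : Fin N → K)
    (i0 i1 i2 : Fin (m+1)) (c : K) :
    ∃ S : Finset (PN K m d), ↑S ⊆ XSet K m d ∧ S.card ≤ N + k ∧
      c • ((∑ j, w j • nu d (lpt i0 i1 (x j))) + ∑ i : Fin k, nu d (lpt i2 i1 ((i : ℕ) : K))) ∈
        Submodule.span K (Projectivization.rep '' (S : Set (PN K m d))) := by
  obtain ⟨S, h1, h2, h3⟩ := exists_S (m := m) d (ι := Fin N ⊕ Fin k)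
    (Sum.elim w (fun _ => 1)) (Sum.elim (fun j => lpt i0 i1 (x j)) (fun i => lpt i2 i1 ((i : ℕ) : K)))
    (by rintro (j | j) <;> exact lpt_ne_zero _ _ _)
  refine ⟨S, h1, by simpa using h2, Submodule.smul_mem _ _ ?_⟩
  simpa using h3

lemma phi_rank_upper {K : Type} [Field K] [IsAlgClosed K] [CharZero K] {m : ℕ} (d b k : ℕ)
    (hd : 2 * b ≤ d) (i0 i1 i2 : Fin (m+1)) (c : K) :
    ∃ S : Finset (PN K m d), ↑S ⊆ XSet K m d ∧ S.card ≤ d + 1 - b + k ∧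
      c • phi d b k i0 i1 i2 ∈
        Submodule.span K (Projectivization.rep '' (S : Set (PN K m d))) := by
  obtain ⟨w, x, hw⟩ := roots (K := K) (d + 1 - b) b (by omega)
  have : phi d b k i0 i1 i2 = (∑ j, w j • nu d (lpt i0 i1 (x j))) +
      ∑ i : Fin k, nu d (lpt i2 i1 ((i : ℕ) : K)) := by
    rw [phi]
    congr 1
    ext f
    have h := roots_eval d w x hw i0 i1 1 f
    simp only [one_mul, one_pow] at h
    simp only [LinearMap.sum_apply, LinearMap.smul_apply, smul_eq_mul, nu_apply]
    rw [h, lcf_apply, Finset.sum_eq_single_of_mem b (Finset.mem_range.mpr (by omega)), if_pos]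
    · rw [show b + (d + 1 - b - b) = d + 1 - b by omega]
    · intro j hj hne
      rw [if_neg]
      rintro ⟨t, ht⟩
      rw [Finset.mem_range] at hj
      rcases Nat.lt_or_ge t 2 with h2 | h2
      · interval_cases t <;> omega
      · have : (d + 1 - b) * 2 ≤ (d + 1 - b) * t := Nat.mul_le_mul_left _ h2
        omega
  rw [this]
  exact exists_S_lines d _ k w x i0 i1 i2 c

lemma poly_curve {K V : Type} [Field K] [AddCommGroup V] [Module K V] (γ : K → V)
    (hγ : ∀ φ : V →ₗ[K] K, ∃ p : Polynomial K, ∀ t, φ (γ t) = p.eval t)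
    (F : V → K) (hF : F ∈ polyFunctions K V) : ∃ p : Polynomial K, ∀ t, F (γ t) = p.eval t := by
  induction hF using Algebra.adjoin_induction with
  | mem x hx => obtain ⟨φ, rfl⟩ := hx; exact hγ φ
  | algebraMap r => exact ⟨Polynomial.C r, fun t => by simp [Pi.algebraMap_apply]⟩
  | add x y _ _ hx hy =>
    obtain ⟨p, hp⟩ := hx
    obtain ⟨q, hq⟩ := hy
    exact ⟨p + q, fun t => by simp [hp, hq]⟩
  | mul x y _ _ hx hy =>
    obtain ⟨p, hp⟩ := hx
    obtain ⟨q, hq⟩ := hy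
    exact ⟨p * q, fun t => by simp [hp, hq]⟩

lemma mem_secant_of_curve {K : Type} [Field K] [CharZero K] {m d : ℕ} (s : ℕ)
    (γ : K → Module.Dual K (Hd K m d))
    (hγ : ∀ φ : Module.Dual K (Hd K m d) →ₗ[K] K, ∃ p : Polynomial K, ∀ t, φ (γ t) = p.eval t)
    (h0 : ∀ t, γ t ≠ 0)
    (hS : ∀ t, t ≠ 0 → ∀ c : K, ∃ S : Finset (PN K m d), ↑S ⊆ XSet K m d ∧ S.card ≤ s ∧
      c • γ t ∈ Submodule.span K (Projectivization.rep '' (S : Set (PN K m d)))) :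
    Projectivization.mk K (γ 0) (h0 0) ∈ secantWrt (XSet K m d) s := by
  intro F hF hvan c
  obtain ⟨u, hu⟩ := Projectivization.exists_smul_eq_mk_rep K (γ 0) (h0 0)
  rw [← hu, Units.smul_def, smul_smul]
  obtain ⟨p, hp⟩ := poly_curve (fun t => (c * (u : K)) • γ t) (by
    intro φ
    obtain ⟨p, hp⟩ := hγ φ
    exact ⟨Polynomial.C (c * (u : K)) * p, fun t => by simp [hp]⟩) F hF
  have hz : p = 0 := by
    apply Polynomial.eq_zero_of_infinite_isRoot
    refine Set.Infinite.mono (s := {0}ᶜ) ?_ (Set.Finite.infinite_compl (Set.finite_singleton 0))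
    intro t ht
    rw [Set.mem_ofPred_eq, Polynomial.IsRoot, ← hp t]
    obtain ⟨u', hu'⟩ := Projectivization.exists_smul_eq_mk_rep K (γ t) (h0 t)
    have := hvan (Projectivization.mk K (γ t) (h0 t)) (by
      obtain ⟨S, h1, h2, h3⟩ := hS t ht u'
      refine ⟨S, h1, h2, ?_⟩
      rw [← hu', Units.smul_def]
      exact h3) (c * u * (u'⁻¹ : Kˣ))
    rw [← hu', Units.smul_def, smul_smul, mul_assoc, ← Units.val_mul, inv_mul_cancel, Units.val_one,
      mul_one] at this
    exact this
  have := hp 0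
  rw [hz, Polynomial.eval_zero] at this
  exact this

lemma lineMap_mono {K σ : Type} [Field K] [DecidableEq σ] (i0 i1 : σ) (h : i1 ≠ i0) (n j : ℕ) :
    lineMap i0 i1 (MvPolynomial.X i0 ^ n * MvPolynomial.X i1 ^ j : MvPolynomial σ K) =
      Polynomial.X ^ j := by
  simp [lineMap, h]

lemma mono_hom {K σ : Type} [Field K] (i0 i1 : σ) (n j : ℕ) :
    (MvPolynomial.X i0 ^ n * MvPolynomial.X i1 ^ j : MvPolynomial σ K).IsHomogeneous (n + j) := by
  simpa using ((MvPolynomial.isHomogeneous_X K i0).pow n).mul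
    ((MvPolynomial.isHomogeneous_X K i1).pow j)

lemma phi_mem_secant {K : Type} [Field K] [IsAlgClosed K] [CharZero K] {m : ℕ} (d b k : ℕ)
    (hd : b < d) (i0 i1 i2 : Fin (m+1)) (h10 : i1 ≠ i0) (h20 : i2 ≠ i0)
    (h0 : phi d b k i0 i1 i2 ≠ (0 : Module.Dual K (Hd K m d))) :
    Projectivization.mk K (phi d b k i0 i1 i2) h0 ∈ secantWrt (XSet K m d) (b + 1 + k) := by
  set γ : K → Module.Dual K (Hd K m d) := fun t =>
    (∑ l ∈ Finset.range (d + 1), if b + 1 ∣ l + 1 then t ^ (l - b) • lcf d i0 i1 l else 0) +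
      ∑ i : Fin k, nu d (lpt i2 i1 ((i : ℕ) : K)) with hγ
  have hγ0 : γ 0 = phi d b k i0 i1 i2 := by
    simp only [hγ, phi]
    congr 1
    rw [Finset.sum_eq_single_of_mem b (Finset.mem_range.mpr (by omega))]
    · simp
    · intro l hl hne
      split_ifs with hdv
      · have := Nat.le_of_dvd (by omega) hdv
        rw [zero_pow (by omega), zero_smul]
      · rfl
  have hne : ∀ t, γ t ≠ 0 := by
    intro t ht
    have h1 := DFunLike.congr_fun ht (⟨MvPolynomial.X i0 ^ (d - b) * MvPolynomial.X i1 ^ b, by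
      have := mono_hom (K := K) i0 i1 (d - b) b
      rwa [Nat.sub_add_cancel hd.le] at this⟩ : Hd K m d)
    simp only [hγ, LinearMap.add_apply, LinearMap.sum_apply, nu_apply, LinearMap.zero_apply] at h1
    rw [Finset.sum_eq_single_of_mem b (Finset.mem_range.mpr (by omega))] at h1
    · rw [if_pos dvd_rfl, LinearMap.smul_apply, lcf_apply, lineMap_mono _ _ h10] at h1
      rw [Finset.sum_eq_zero] at h1
      · simp at h1
      · intro i _
        have : (d - b) ≠ 0 := by omega
        simp [lpt, h20.symm, h10.symm, this]
    · intro l _ hl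
      split_ifs
      · rw [LinearMap.smul_apply, lcf_apply, lineMap_mono _ _ h10, Polynomial.coeff_X_pow,
          if_neg hl, smul_zero]
      · rfl
  have key := mem_secant_of_curve (b + 1 + k) γ (by
    intro φ
    refine ⟨(∑ l ∈ Finset.range (d + 1), if b + 1 ∣ l + 1 then
      Polynomial.C (φ (lcf d i0 i1 l)) * Polynomial.X ^ (l - b) else 0) +
      Polynomial.C (φ (∑ i : Fin k, nu d (lpt i2 i1 ((i : ℕ) : K)))), fun t => ?_⟩
    simp only [hγ]
    rw [map_add, map_sum, Polynomial.eval_add, Polynomial.eval_C, Polynomial.eval_finsetSum]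
    congr 1
    refine Finset.sum_congr rfl fun l _ => ?_
    split_ifs
    · rw [map_smul, smul_eq_mul, Polynomial.eval_mul, Polynomial.eval_C, Polynomial.eval_pow,
        Polynomial.eval_X, mul_comm]
    · rw [map_zero, Polynomial.eval_zero]) hne (by
    intro t ht c
    obtain ⟨w, x, hw⟩ := roots (K := K) (b + 1) b (by omega)
    have h := exists_S_lines (m := m) d (b + 1) k (fun j => (t ^ b)⁻¹ * w j) (fun j => t * x j)
      i0 i1 i2 c
    suffices hγt : γ t = (∑ j, ((t ^ b)⁻¹ * w j) • nu d (lpt i0 i1 (t * x j))) +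
        ∑ i : Fin k, nu d (lpt i2 i1 ((i : ℕ) : K)) by
      rw [hγt]; exact h
    simp only [hγ]
    congr 1
    ext f
    have h2 := roots_eval d w x hw i0 i1 t f
    simp only [LinearMap.sum_apply, LinearMap.smul_apply, smul_eq_mul, nu_apply, mul_assoc]
    rw [← Finset.mul_sum, h2, Finset.mul_sum]
    refine Finset.sum_congr rfl fun l _ => ?_
    rw [Nat.add_sub_cancel_left]
    split_ifs with hdv
    · have := Nat.le_of_dvd (by omega) hdv
      obtain ⟨q, rfl⟩ : ∃ q, l = b + q := ⟨l - b, by omega⟩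
      rw [LinearMap.smul_apply, lcf_apply, smul_eq_mul, Nat.add_sub_cancel_left, pow_add]
      field_simp
    · simp)
  simp only [hγ0] at key
  exact key

lemma not_mem_secant {K : Type} [Field K] {m : ℕ} (d a a' : ℕ)
    (φ : Module.Dual K (Hd K m d)) (h0 : φ ≠ 0) {ι : Type} [Fintype ι] [DecidableEq ι]
    (G : ι → Hd K m a) (H : ι → Hd K m a') (GH : ι → ι → Hd K m d)
    (hGH : ∀ i j, (GH i j : PR K m) = (G i : PR K m) * (H j : PR K m))
    (hdet : (Matrix.of fun i j => φ (GH i j)).det ≠ 0) (t : ℕ) (ht : t < Fintype.card ι) :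
    Projectivization.mk K φ h0 ∉ secantWrt (XSet K m d) t := by
  intro hmem
  set F : Module.Dual K (Hd K m d) → K := fun ψ => (Matrix.of fun i j => ψ (GH i j)).det with hF
  have hFp : F ∈ polyFunctions K (Module.Dual K (Hd K m d)) := by
    have : F = ∑ σ : Equiv.Perm ι, ((Equiv.Perm.sign σ : ℤ) : K) •
        ∏ i, (fun ψ : Module.Dual K (Hd K m d) => ψ (GH (σ i) i)) := by
      ext ψ
      simp [hF, Matrix.det_apply, Finset.sum_apply, Finset.prod_apply, Units.smul_def]
    rw [this]
    refine Subalgebra.sum_mem _ fun σ _ => Subalgebra.smul_mem _ (Subalgebra.prod_mem _ fun i _ => ?_) _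
    exact Algebra.subset_adjoin ⟨Module.Dual.eval K _ (GH (σ i) i), rfl⟩
  obtain ⟨u, hu⟩ := Projectivization.exists_smul_eq_mk_rep K φ h0
  have := hmem F hFp (by
    rintro Q ⟨S, hS, hc, hsp⟩ c
    obtain ⟨g, v, -, hg⟩ := of_S d S hS (c • Q.rep) (Submodule.smul_mem _ _ hsp)
    rw [hg]
    simp only [hF]
    by_contra hne
    have h1 : (Matrix.of fun i j => (∑ Q, g Q • nu d (v Q)) (GH i j)) =
        (Matrix.of fun (i : ι) (Q : S) => MvPolynomial.eval (v Q) (G i : PR K m)) *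
        (Matrix.of fun (Q : S) (j : ι) => g Q * MvPolynomial.eval (v Q) (H j : PR K m)) := by
      ext i j
      rw [Matrix.mul_apply]
      simp only [Matrix.of_apply, LinearMap.sum_apply, LinearMap.smul_apply, nu_apply, hGH, map_mul,
        smul_eq_mul]
      refine Finset.sum_congr rfl fun Q _ => ?_
      ring
    have h2 := Matrix.rank_of_isUnit _ ((Matrix.isUnit_iff_isUnit_det _).mpr (IsUnit.mk0 _ hne))
    rw [h1] at h2
    have h3 := (Matrix.rank_mul_le_left (Matrix.of fun (i : ι) (Q : S) =>
      MvPolynomial.eval (v Q) (G i : PR K m)) (Matrix.of fun (Q : S) (j : ι) =>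
      g Q * MvPolynomial.eval (v Q) (H j : PR K m))).trans (Matrix.rank_le_card_width _)
    rw [h2, Fintype.card_coe] at h3
    omega) ((u⁻¹ : Kˣ) : K)
  rw [← hu, ← Units.smul_def, inv_smul_smul] at this
  exact hdet this

lemma phi_not_mem {K : Type} [Field K] [CharZero K] {m : ℕ} (d b k : ℕ)
    (hd : 2 * (b + 1 + k) + 2 ≤ d) (i0 i1 i2 : Fin (m+1)) (h10 : i1 ≠ i0) (h20 : i2 ≠ i0)
    (h21 : i2 ≠ i1)
    (h0 : phi d b k i0 i1 i2 ≠ (0 : Module.Dual K (Hd K m d))) (t : ℕ) (ht : t < b + 1 + k) :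
    Projectivization.mk K (phi d b k i0 i1 i2) h0 ∉ secantWrt (XSet K m d) t := by
  set s := b + 1 + k with hs
  have hlin : ∀ c : K, (MvPolynomial.X i1 - MvPolynomial.C c * MvPolynomial.X i2 : PR K m).IsHomogeneous 1 := by
    intro c
    refine (MvPolynomial.isHomogeneous_X K i1).sub ?_
    simpa using (MvPolynomial.isHomogeneous_C _ c).mul (MvPolynomial.isHomogeneous_X K i2)
  let G : Fin (b + 1) ⊕ Fin k → Hd K m s := Sum.elim
    (fun j => ⟨MvPolynomial.X i0 ^ (s - j) * MvPolynomial.X i1 ^ (j : ℕ), by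
      have := mono_hom (K := K) i0 i1 (s - j) j
      rwa [Nat.sub_add_cancel (by omega)] at this⟩)
    (fun i => ⟨MvPolynomial.X i2 ^ (b + 2) * ∏ j ∈ Finset.univ.erase i,
        (MvPolynomial.X i1 - MvPolynomial.C (((j : Fin k) : ℕ) : K) * MvPolynomial.X i2), by
      have h1 := (MvPolynomial.isHomogeneous_X K i2).pow (b + 2)
      have h2 := MvPolynomial.IsHomogeneous.prod (Finset.univ.erase i)
        (fun j : Fin k => (MvPolynomial.X i1 - MvPolynomial.C ((j : ℕ) : K) * MvPolynomial.X i2 : PR K m))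
        (fun _ => 1) (fun j _ => hlin _)
      have h3 := h1.mul h2
      have hk := i.2
      have h4 : 1 * (b + 2) + ∑ _j ∈ Finset.univ.erase i, 1 = s := by
        rw [Finset.sum_const, Finset.card_erase_of_mem (Finset.mem_univ i)]
        simp only [Finset.card_univ, Fintype.card_fin, smul_eq_mul]
        omega
      rw [h4] at h3
      exact h3⟩)
  let H : Fin (b + 1) ⊕ Fin k → Hd K m (d - s) := Sum.elim
    (fun j => ⟨MvPolynomial.X i0 ^ (d - s - (b - j)) * MvPolynomial.X i1 ^ (b - j : ℕ), by
      have := mono_hom (K := K) i0 i1 (d - s - (b - j)) (b - j)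
      rwa [Nat.sub_add_cancel (by omega)] at this⟩)
    (fun i => ⟨MvPolynomial.X i2 ^ (d - s - (k - 1)) * ∏ j ∈ Finset.univ.erase i,
        (MvPolynomial.X i1 - MvPolynomial.C (((j : Fin k) : ℕ) : K) * MvPolynomial.X i2), by
      have h1 := (MvPolynomial.isHomogeneous_X K i2).pow (d - s - (k - 1))
      have h2 := MvPolynomial.IsHomogeneous.prod (Finset.univ.erase i)
        (fun j : Fin k => (MvPolynomial.X i1 - MvPolynomial.C ((j : ℕ) : K) * MvPolynomial.X i2 : PR K m))
        (fun _ => 1) (fun j _ => hlin _)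
      have h3 := h1.mul h2
      have hk := i.2
      have h4 : 1 * (d - s - (k - 1)) + ∑ _j ∈ Finset.univ.erase i, 1 = d - s := by
        rw [Finset.sum_const, Finset.card_erase_of_mem (Finset.mem_univ i)]
        simp only [Finset.card_univ, Fintype.card_fin, smul_eq_mul]
        omega
      rw [h4] at h3
      exact h3⟩)
  let GH : Fin (b + 1) ⊕ Fin k → Fin (b + 1) ⊕ Fin k → Hd K m d := fun i j =>
    ⟨(G i : PR K m) * (H j : PR K m), by
      have := MvPolynomial.IsHomogeneous.mul (G i).2 (H j).2
      rwa [Nat.add_sub_cancel' (by omega)] at this⟩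
  refine not_mem_secant d s (d - s) _ h0 G H GH (fun _ _ => rfl) ?_ t (by simpa using ht)
  have happ : ∀ i j, phi d b k i0 i1 i2 (GH i j) =
      (lineMap i0 i1 (G i : PR K m) * lineMap i0 i1 (H j : PR K m)).coeff b +
      ∑ l : Fin k, MvPolynomial.eval (lpt i2 i1 ((l : ℕ) : K)) (G i : PR K m) *
        MvPolynomial.eval (lpt i2 i1 ((l : ℕ) : K)) (H j : PR K m) := by
    intro i j
    simp only [phi, LinearMap.add_apply, LinearMap.sum_apply, nu_apply, lcf_apply, GH, map_mul]
  have hG1 : ∀ j, lineMap i0 i1 (G (Sum.inl j) : PR K m) = Polynomial.X ^ (j : ℕ) :=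
    fun j => lineMap_mono i0 i1 h10 _ _
  have hH1 : ∀ j, lineMap i0 i1 (H (Sum.inl j) : PR K m) = Polynomial.X ^ (b - j : ℕ) :=
    fun j => lineMap_mono i0 i1 h10 _ _
  have hG2 : ∀ j, lineMap i0 i1 (G (Sum.inr j) : PR K m) = 0 := by
    intro j; simp [G, lineMap, h20, h21]
  have hds : d - s - (k - 1) ≠ 0 := by omega
  have hH2 : ∀ j, lineMap i0 i1 (H (Sum.inr j) : PR K m) = 0 := by
    intro j; simp [H, lineMap, h20, h21, hds]
  have hG3 : ∀ (j : Fin (b + 1)) (c : K), MvPolynomial.eval (lpt i2 i1 c) (G (Sum.inl j) : PR K m) = 0 := by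
    intro j c
    have : s - j ≠ 0 := by omega
    simp [G, lpt, h20.symm, h10.symm, this]
  have hH3 : ∀ (j : Fin (b + 1)) (c : K), MvPolynomial.eval (lpt i2 i1 c) (H (Sum.inl j) : PR K m) = 0 := by
    intro j c
    have : d - s - (b - j) ≠ 0 := by omega
    simp [H, lpt, h20.symm, h10.symm, this]
  have hG4 : ∀ (j l : Fin k), MvPolynomial.eval (lpt i2 i1 ((l : ℕ) : K)) (G (Sum.inr j) : PR K m) =
      ∏ q ∈ Finset.univ.erase j, (((l : ℕ) : K) - ((q : ℕ) : K)) := by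
    intro j l
    simp [G, lpt, h21.symm]
  have hH4 : ∀ (j l : Fin k), MvPolynomial.eval (lpt i2 i1 ((l : ℕ) : K)) (H (Sum.inr j) : PR K m) =
      ∏ q ∈ Finset.univ.erase j, (((l : ℕ) : K) - ((q : ℕ) : K)) := by
    intro j l
    simp [H, lpt, h21.symm]
  have hM : (Matrix.of fun i j => phi d b k i0 i1 i2 (GH i j)) = Matrix.diagonal (Sum.elim
      (fun _ : Fin (b + 1) => (1 : K)) (fun i : Fin k => (∏ q ∈ Finset.univ.erase i,
        (((i : ℕ) : K) - ((q : ℕ) : K))) ^ 2)) := by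
    ext i j
    rw [Matrix.of_apply, happ]
    rcases i with i | i <;> rcases j with j | j
    · rw [hG1, hH1, ← pow_add, Polynomial.coeff_X_pow,
        Finset.sum_eq_zero (fun l _ => by rw [hG3, zero_mul]), add_zero, Matrix.diagonal_apply]
      have hi := i.2
      have hj := j.2
      by_cases hij : i = j
      · subst hij
        rw [if_pos (by omega), if_pos rfl, Sum.elim_inl]
      · have : (i : ℕ) ≠ j := fun h => hij (Fin.ext h)
        rw [if_neg (by omega), if_neg (by simpa using hij)]
    · rw [hH2, mul_zero, Polynomial.coeff_zero,
        Finset.sum_eq_zero (fun l _ => by rw [hG3, zero_mul]), add_zero, Matrix.diagonal_apply,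
        if_neg (by simp)]
    · rw [hG2, zero_mul, Polynomial.coeff_zero,
        Finset.sum_eq_zero (fun l _ => by rw [hH3, mul_zero]), add_zero, Matrix.diagonal_apply,
        if_neg (by simp)]
    · rw [hG2, zero_mul, Polynomial.coeff_zero, zero_add, Finset.sum_eq_single i]
      · rw [hG4, hH4, Matrix.diagonal_apply]
        by_cases hij : i = j
        · subst hij
          rw [if_pos rfl, Sum.elim_inr, sq]
        · rw [if_neg (by simpa using hij), Finset.prod_eq_zero (s := Finset.univ.erase j)
            (Finset.mem_erase.mpr ⟨hij, Finset.mem_univ i⟩) (sub_self _), mul_zero]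
      · intro l _ hl
        rw [hG4, Finset.prod_eq_zero (Finset.mem_erase.mpr ⟨hl, Finset.mem_univ l⟩) (sub_self _),
          zero_mul]
      · simp
  rw [hM, Matrix.det_diagonal, Finset.prod_ne_zero_iff]
  rintro (i | i) -
  · simp
  · rw [Sum.elim_inr]
    apply pow_ne_zero
    rw [Finset.prod_ne_zero_iff]
    intro q hq
    rw [sub_ne_zero]
    intro h
    exact (Finset.mem_erase.mp hq).1 (Fin.ext (Nat.cast_injective h)).symm

lemma to_points {K : Type} [Field K] (d : ℕ) (hd : d ≠ 0) {ι : Type} [Fintype ι] (g : ι → K)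
    (v : ι → Fin 3 → K) :
    ∃ (A : Finset (ℙ K (Fin 3 → K))) (α : ℙ K (Fin 3 → K) → K), A.card ≤ Fintype.card ι ∧
      ∀ f : MvPolynomial (Fin 3) K, f.IsHomogeneous d →
        ∑ i, g i * MvPolynomial.eval (v i) f = ∑ Q ∈ A, α Q * MvPolynomial.eval Q.rep f := by
  classical
  have h : ∀ i, ∃ (Q : ℙ K (Fin 3 → K)) (x : K), v i = x • Q.rep := by
    intro i
    by_cases hv : v i = 0
    · exact ⟨E0 K, 0, by rw [hv, zero_smul]⟩
    · obtain ⟨u, hu⟩ := Projectivization.exists_smul_eq_mk_rep K (v i) hv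
      exact ⟨Projectivization.mk K (v i) hv, (u⁻¹ : Kˣ), by
        rw [← hu, ← Units.smul_def, inv_smul_smul]⟩
  choose q x hqx using h
  refine ⟨Finset.univ.image q, fun Q => ∑ i ∈ Finset.univ.filter (fun i => q i = Q), g i * x i ^ d,
    Finset.card_image_le, fun f hf => ?_⟩
  rw [← Finset.sum_fiberwise_of_maps_to (s := Finset.univ) (t := Finset.univ.image q) (g := q)
    (fun i _ => Finset.mem_image_of_mem q (Finset.mem_univ i))]
  refine Finset.sum_congr rfl fun Q _ => ?_
  rw [Finset.sum_mul]
  refine Finset.sum_congr rfl fun i hi => ?_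
  rw [hqx i, eval_smul_hom f d hf, (Finset.mem_filter.mp hi).2, mul_assoc]

lemma lpt_comp {K σ τ : Type} [Field K] [DecidableEq σ] [DecidableEq τ] (j : σ → τ)
    (hj : Function.Injective j) (i0 i1 : σ) (t : K) : lpt (j i0) (j i1) t ∘ j = lpt i0 i1 t := by
  ext i
  simp [lpt, hj.eq_iff]

lemma lineMap_rename {K σ τ : Type} [Field K] [DecidableEq σ] [DecidableEq τ] (j : σ → τ)
    (hj : Function.Injective j) (i0 i1 : σ) (f : MvPolynomial σ K) :
    lineMap (j i0) (j i1) (MvPolynomial.rename j f) = lineMap i0 i1 f := by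
  rw [lineMap, lineMap, MvPolynomial.aeval_rename]
  congr 2
  ext i
  simp [hj.eq_iff]

lemma phi_rank_lower {K : Type} [Field K] [CharZero K] {m : ℕ} (d b k : ℕ) (hb : 1 ≤ b)
    (hd : 2 * (b + 1 + k) + 2 ≤ d) (j : Fin 3 → Fin (m+1)) (hj : Function.Injective j)
    (S : Finset (PN K m d)) (hS : ↑S ⊆ XSet K m d)
    (h : phi d b k (j 0) (j 1) (j 2) ∈
      Submodule.span K (Projectivization.rep '' (S : Set (PN K m d)))) :
    d + 1 - b + k ≤ S.card := by
  classical
  obtain ⟨g, v, -, hg⟩ := of_S d S hS _ h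
  obtain ⟨A, α, hA, hα⟩ := to_points d (by omega) g (fun Q => v Q ∘ j)
  rw [Fintype.card_coe] at hA
  let q : Fin k → ℙ K (Fin 3 → K) := fun i =>
    Projectivization.mk K (lpt 2 1 ((i : ℕ) : K)) (lpt_ne_zero _ _ _)
  have hq : ∀ i, (q i).rep 2 ≠ 0 ∧ (q i).rep = (q i).rep 2 • (lpt 2 1 ((i : ℕ) : K) : Fin 3 → K) := by
    intro i
    obtain ⟨u, hu⟩ := Projectivization.exists_smul_eq_mk_rep K (lpt 2 1 ((i : ℕ) : K) : Fin 3 → K)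
      (lpt_ne_zero _ _ _)
    have h2 : (q i).rep = (u : K) • (lpt 2 1 ((i : ℕ) : K) : Fin 3 → K) := hu.symm
    have h3 : (q i).rep 2 = u := by rw [h2]; simp [lpt]
    rw [h3]
    exact ⟨u.ne_zero, h2⟩
  have hqinj : Function.Injective q := by
    intro i i' hii
    have h1 := (hq i).2
    rw [hii, (hq i').2] at h1
    have h2 := congrFun h1 1
    have h12 : (1 : Fin 3) ≠ 2 := by decide
    simp only [Pi.smul_apply, lpt, if_neg h12, if_true, smul_eq_mul, mul_one] at h2
    have h3 := mul_left_cancel₀ (hq i').1 h2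
    exact (Fin.ext (Nat.cast_injective h3)).symm
  have := plane_lower d b k hb hd A (Finset.univ.image q) α (fun Q => (Q.rep 2 ^ d)⁻¹)
    (by rw [Finset.card_image_of_injective _ hqinj]; simp)
    (by
      intro Q hQ
      obtain ⟨i, -, rfl⟩ := Finset.mem_image.mp hQ
      exact inv_ne_zero (pow_ne_zero _ (hq i).1))
    (by
      intro Q hQ
      obtain ⟨i, -, rfl⟩ := Finset.mem_image.mp hQ
      exact (hq i).1)
    (by
      intro f hf
      rw [← hα f hf, Finset.sum_image (fun _ _ _ _ h => hqinj h)]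
      have h1 := DFunLike.congr_fun hg (⟨MvPolynomial.rename j f, hf.rename_isHomogeneous⟩ : Hd K m d)
      simp only [phi, LinearMap.add_apply, LinearMap.sum_apply, LinearMap.smul_apply, nu_apply,
        lcf_apply, lineMap_rename j hj, MvPolynomial.eval_rename, lpt_comp j hj, smul_eq_mul] at h1
      rw [← h1]
      congr 1
      refine Finset.sum_congr rfl fun i _ => ?_
      conv_lhs => rw [(hq i).2]
      rw [eval_smul_hom f d hf]
      have h3 : (lpt 2 1 ((i : ℕ) : K) : Fin 3 → K) 2 = 1 := by simp [lpt]
      rw [Pi.smul_apply, h3, smul_eq_mul, mul_one, ← mul_assoc,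
        inv_mul_cancel₀ (pow_ne_zero _ (hq i).1), one_mul])
  omega

end

/-- Step (a) of the proof of the main theorem: nonemptiness of `σ_{s,r}(X_{m,d})` for
`d+2-s ≤ r ≤ d+s-2` with `r + s ≡ d (mod 2)`. -/
theorem stmt14 (K : Type) [Field K] [IsAlgClosed K] [CharZero K]
    (m s d : ℕ) (hm : 2 ≤ m) (hs : 4 ≤ s) (hd : 2 * s + 2 ≤ d) :
    ∀ r : ℕ, d + 2 ≤ r + s → r + 2 ≤ d + s → (r + s) % 2 = d % 2 →
      (sigmaSet K m d s r).Nonempty := by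
  intro r h1 h2 h3
  obtain ⟨k, hk⟩ : ∃ k, r + s = d + 2 + 2 * k := ⟨(r + s - d - 2) / 2, by omega⟩
  obtain ⟨b, hb⟩ : ∃ b, s = b + 1 + k := ⟨s - k - 1, by omega⟩
  have hb1 : 1 ≤ b := by omega
  have hd' : 2 * (b + 1 + k) + 2 ≤ d := by omega
  have hr : r = d + 1 - b + k := by omega
  obtain ⟨j, hj⟩ : ∃ j : Fin 3 → Fin (m + 1), Function.Injective j :=
    ⟨Fin.castLE (by omega), Fin.castLE_injective _⟩
  have h10 : j 1 ≠ j 0 := fun h => absurd (hj h) (by decide)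
  have h20 : j 2 ≠ j 0 := fun h => absurd (hj h) (by decide)
  have h21 : j 2 ≠ j 1 := fun h => absurd (hj h) (by decide)
  have h0 : phi d b k (j 0) (j 1) (j 2) ≠ (0 : Module.Dual K (Hd K m d)) := by
    intro h
    have := phi_rank_lower (K := K) d b k hb1 hd' j hj ∅ (by simp) (by rw [h]; exact zero_mem _)
    simp at this
    omega
  refine ⟨Projectivization.mk K _ h0, ?_, ?_⟩
  · have hmem := phi_mem_secant (K := K) d b k (by omega) (j 0) (j 1) (j 2) h10 h20 h0
    rw [hb]
    refine le_antisymm (Nat.sInf_le ⟨by omega, hmem⟩) ?_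
    refine le_csInf ⟨b + 1 + k, by omega, hmem⟩ ?_
    rintro t ⟨-, ht⟩
    by_contra hlt
    exact phi_not_mem (K := K) d b k hd' (j 0) (j 1) (j 2) h10 h20 h21 h0 t (by omega) ht
  · obtain ⟨u, hu⟩ := Projectivization.exists_smul_eq_mk_rep K _ h0
    obtain ⟨S, hS1, hS2, hS3⟩ := phi_rank_upper (K := K) d b k (by omega) (j 0) (j 1) (j 2) (u : K)
    rw [← Units.smul_def, hu] at hS3
    rw [hr]
    refine le_antisymm (le_trans (Nat.sInf_le (m := S.card) ?_) hS2) ?_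
    · exact ⟨S, hS1, rfl, hS3⟩
    refine le_csInf ⟨S.card, S, hS1, rfl, hS3⟩ ?_
    rintro t ⟨T, hT1, rfl, hT3⟩
    refine phi_rank_lower (K := K) d b k hb1 hd' j hj T hT1 ?_
    rw [← hu] at hT3
    have := Submodule.smul_mem _ ((u⁻¹ : Kˣ) : K) hT3
    rwa [← Units.smul_def, inv_smul_smul] at this
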